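/- There exist constants c > 0, c₁ > 0, a > 0, b > 0, K > 0, and n₀ such that for every integer n ≥ n₀ the following holds. Let p₁,…,pₙ be n points chosen independently and uniformly at random from the flat unit torus T², let P = {p₁,…,pₙ}, let f = ⌈c·√n·log n⌉ and R = c₁·√((log n)/n), and define the (random) selected index i* as the smallest index i with n − f < i ≤ n such that the closed ball of radius R centered at pᵢ contains none of the points p₁,…,p_{i−1}; if no such index exists, set i* = n. Then with probability at least 1 − K·(log² n)/√n, both of the following hold: μ(Vor(p_{i*}, P)) ≥ a·(log n)/n, and max over p ∈ P of μ(Vor(p,P)) ≤ b·(log n)/n. In particular, the online strategy selecting p_{i*} is O(1)-competitive against the prophet who picks the largest Voronoi cell of P, with probability at least 1 − K·(log² n)/√n. -/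

import Mathlib

/-!
If every point of the torus is within order `r = √(log n / n)` of the sample, then every Voronoi
cell has area `O(r²)`; a Markov bound on the area left vacant by balls of radius `r` around the
sample points shows that this holds with high probability.

For the player, the expected area left vacant by balls of radius `R`, a small multiple of `r`, is
at least a constant times `n ^ (-1/8)`. Probes more than `2R` apart are nonpositively correlated,
so by Chebyshev's inequality the vacant area is of this order with high probability. Only the first
`g`, about `n ^ (1/8) log n`, of the last `f` points are then needed for one of them to land in the
vacancy of its predecessors; as `g` is so small, a union bound shows that these `g` points are
pairwise more than `R` apart. The selected index is determined by the points up to it, so each later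
point is within `R` of the selected one with probability `O(R²)`. The resulting error
`f R² = O(log² n / √n)` dominates all the others.
-/

open MeasureTheory
open scoped Classical

instance : Fact ((0 : ℝ) < 1) := ⟨one_pos⟩

/-- The flat unit torus `T² = (ℝ/ℤ)²`. -/
abbrev T2 : Type := AddCircle (1 : ℝ) × AddCircle (1 : ℝ)

/-- The torus distance on `T²`: the Euclidean combination of the quotient distances on the
two coordinates. -/
noncomputable def dT (p q : T2) : ℝ :=
  Real.sqrt (dist p.1 q.1 ^ 2 + dist p.2 q.2 ^ 2)

/-- The Voronoi cell of `p` with respect to the site set `P`, in the torus metric. -/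
def vor (p : T2) (P : Set T2) : Set T2 :=
  {x | ∀ q ∈ P, dT x p ≤ dT x q}

/-- The point picked by the player's online strategy: the first point, among the last `f`
points of the stream `ω` (i.e. with 0-based index `i` satisfying `n - f ≤ i < n`), whose
closed ball of radius `R` contains none of the previously seen points; if no such point
exists, the last point of the stream is picked (a junk value is returned when `n = 0`). -/
noncomputable def selPoint (n f : ℕ) (R : ℝ) (ω : Fin n → T2) : T2 :=
  if h : (Finset.univ.filter fun i : Fin n =>
      n - f ≤ (i : ℕ) ∧ ∀ j : Fin n, j < i → R < dT (ω j) (ω i)).Nonempty then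
    ω ((Finset.univ.filter fun i : Fin n =>
      n - f ≤ (i : ℕ) ∧ ∀ j : Fin n, j < i → R < dT (ω j) (ω i)).min' h)
  else if hn : 0 < n then ω ⟨n - 1, Nat.sub_lt hn one_pos⟩
  else (0, 0)

open Metric ProbabilityTheory

section ProductMeasure

variable {Ω Y : Type*} [MeasurableSpace Ω] [MeasurableSpace Y] {P : Measure Ω} {Q : Measure Y}
  {Z : Set (Ω × Y)}

lemma integral_measureReal_prodMk_left [IsFiniteMeasure Q] (hZ : MeasurableSet Z) :
    ∫ ω, Q.real (Prod.mk ω ⁻¹' Z) ∂P = (P.prod Q).real Z := by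
  simp only [Measure.real]
  rw [Measure.prod_apply hZ, integral_toReal (measurable_measure_prodMk_left hZ).aemeasurable
    (.of_forall fun _ => measure_lt_top _ _)]

lemma integral_measureReal_prodMk_right [IsFiniteMeasure P] [SFinite Q]
    (hZ : MeasurableSet Z) :
    ∫ y, P.real ((fun ω => (ω, y)) ⁻¹' Z) ∂Q = (P.prod Q).real Z := by
  simp only [Measure.real]
  rw [Measure.prod_apply_symm hZ, integral_toReal (measurable_measure_prodMk_right hZ).aemeasurable
    (.of_forall fun _ => measure_lt_top _ _)]

variable {ι : Type*} [Fintype ι] {X : ι → Type*} [∀ i, MeasurableSpace (X i)]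
  {μ : ∀ i, Measure (X i)} [∀ i, IsProbabilityMeasure (μ i)]

lemma pi_inter_le_mul_of_dependsOn {G : Finset ι} {T : Set ι}
    (hGT : Disjoint (G : Set ι) T) {A B : Set (∀ i, X i)} (hA : MeasurableSet A)
    (hB : MeasurableSet B) (hAT : DependsOn (· ∈ A) T) {c : ENNReal}
    (hc : ∀ ω ∈ A, Measure.pi (fun i : G => μ i) {y | Function.updateFinset ω G y ∈ B} ≤ c) :
    Measure.pi μ (A ∩ B) ≤ c * Measure.pi μ A := by
  have hA_update (ω : ∀ i, X i) (y : ∀ i : G, X i) :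
      Function.updateFinset ω G y ∈ A ↔ ω ∈ A := by
    refine iff_of_eq (hAT fun i hi => ?_)
    have hiG : i ∉ G := fun h => Set.disjoint_left.1 hGT h hi
    simp [Function.updateFinset, hiG]
  rw [← lintegral_indicator_one (hA.inter hB), ← lintegral_indicator_one hA,
    ← lintegral_const_mul _ (measurable_one.indicator hA)]
  refine lintegral_le_of_lmarginal_le G (measurable_one.indicator (hA.inter hB))
    ((measurable_one.indicator hA).const_mul _) fun ω => ?_
  by_cases hω : ω ∈ A
  · have hB_section : MeasurableSet {y | Function.updateFinset ω G y ∈ B} :=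
      hB.preimage measurable_updateFinset
    calc (∫⋯∫⁻_G, (A ∩ B).indicator 1 ∂μ) ω
        = ∫⁻ y, {y | Function.updateFinset ω G y ∈ B}.indicator 1 y
            ∂Measure.pi fun i : G => μ i := by
          simp [lmarginal, Set.indicator_apply, hA_update, hω]
      _ ≤ c := by rw [lintegral_indicator_one hB_section]; exact hc ω hω
      _ = (∫⋯∫⁻_G, (fun ω => c * A.indicator 1 ω) ∂μ) ω := by
          simp [lmarginal, hA_update, hω]
  · simp [lmarginal, hA_update, hω]

lemma measureReal_pi_inter_le_mul_of_dependsOn {G : Finset ι} {T : Set ι}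
    (hGT : Disjoint (G : Set ι) T) {A B : Set (∀ i, X i)} (hA : MeasurableSet A)
    (hB : MeasurableSet B) (hAT : DependsOn (· ∈ A) T) {c : ℝ} (hc0 : 0 ≤ c)
    (hc : ∀ ω ∈ A,
      (Measure.pi fun i : G => μ i).real {y | Function.updateFinset ω G y ∈ B} ≤ c) :
    (Measure.pi μ).real (A ∩ B) ≤ c * (Measure.pi μ).real A := by
  have h := pi_inter_le_mul_of_dependsOn (c := ENNReal.ofReal c) hGT hA hB hAT fun ω hω =>
    (ENNReal.le_ofReal_iff_toReal_le (measure_ne_top _ _) hc0).2 (hc ω hω)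
  simpa [Measure.real, hc0] using
    ENNReal.toReal_mono (ENNReal.mul_ne_top ENNReal.ofReal_ne_top (measure_ne_top _ _)) h

end ProductMeasure

section Probability

variable {Ω : Type*} [MeasurableSpace Ω] {P : Measure Ω} [IsProbabilityMeasure P]

lemma one_sub_ofReal_le_measure {s : Set Ω} {ε : ℝ} (h : P.real sᶜ ≤ ε) :
    1 - ENNReal.ofReal ε ≤ P s := by
  rw [tsub_le_iff_right]
  calc 1 = P (s ∪ sᶜ) := by simp
    _ ≤ P s + P sᶜ := measure_union_le _ _
    _ ≤ P s + ENNReal.ofReal ε := by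
      gcongr
      exact (ENNReal.le_ofReal_iff_toReal_le (measure_ne_top _ _)
        (measureReal_nonneg.trans h)).2 h

lemma measureReal_compl_union_le_mul {A B : Set Ω} (hA : MeasurableSet A) (hB : MeasurableSet B)
    (hAB : Disjoint A B) : P.real (A ∪ B)ᶜ ≤ P.real Aᶜ * P.real Bᶜ := by
  rw [probReal_compl_eq_one_sub (hA.union hB), probReal_compl_eq_one_sub hA,
    probReal_compl_eq_one_sub hB, measureReal_union hAB hB]
  nlinarith [mul_nonneg (measureReal_nonneg (μ := P) (s := A))
    (measureReal_nonneg (μ := P) (s := B))]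

lemma measureReal_lt_le_variance_div_sq {Y : Ω → ℝ} (hY : MemLp Y 2 P) {t : ℝ} (ht : 0 < t)
    (hmean : 2 * t ≤ ∫ ω, Y ω ∂P) : P.real {ω | Y ω < t} ≤ Var[Y; P] / t ^ 2 := by
  refine ENNReal.toReal_le_of_le_ofReal (by positivity [variance_nonneg Y P]) ?_
  refine (measure_mono fun ω (hω : Y ω < t) => ?_).trans (meas_ge_le_variance_div_sq hY ht)
  have : t ≤ -(Y ω - ∫ ω, Y ω ∂P) := by linarith
  exact this.trans (neg_le_abs _)

end Probability

section IsLeast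

variable {ι : Type*}

lemma pairwise_disjoint_isLeast {Ω : Type*} [PartialOrder ι] (p : ι → Ω → Prop) :
    Pairwise (Function.onFun Disjoint fun i => {ω | IsLeast {k | p k ω} i}) := fun _ _ hik =>
  Set.disjoint_left.2 fun _ hi hk => hik (hi.unique hk)

lemma measurableSet_isLeast {Ω : Type*} [MeasurableSpace Ω] [Countable ι] [Preorder ι]
    {p : ι → Ω → Prop} (hp : ∀ i, MeasurableSet {ω | p i ω}) (i : ι) :
    MeasurableSet {ω | IsLeast {k | p k ω} i} := by
  have h : {ω | IsLeast {k | p k ω} i} = {ω | p i ω} ∩ ⋂ k, ⋂ (_ : ¬ i ≤ k), {ω | p k ω}ᶜ := by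
    ext
    simp [IsLeast, lowerBounds, not_imp_comm]
  rw [h]
  exact (hp i).inter (.iInter fun k => .iInter fun _ => (hp k).compl)

lemma dependsOn_isLeast {Y : Type*} [LinearOrder ι] {p : ι → (ι → Y) → Prop}
    (hp : ∀ i, DependsOn (p i) (Set.Iic i)) (i : ι) :
    DependsOn (fun ω => IsLeast {k | p k ω} i) (Set.Iic i) := by
  have key (ω ω' : ι → Y) (h : ∀ k ∈ Set.Iic i, ω k = ω' k) (hi : IsLeast {k | p k ω} i) :
      IsLeast {k | p k ω'} i := by
    refine ⟨(hp i h).mp hi.1, fun k hk => ?_⟩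
    by_contra! hki
    exact hki.not_ge (hi.2 ((hp k fun l hl => h l (hl.trans hki.le)).mpr hk))
  exact fun ω ω' h => propext ⟨key ω ω' h, key ω' ω fun k hk => (h k hk).symm⟩

end IsLeast

section Sample

variable {ι : Type*}

/-- The law of a family, indexed by `ι`, of independent points with distribution `μ`. -/
noncomputable abbrev iidLaw (ι : Type*) [Fintype ι] {X : Type*} [MeasurableSpace X]
    (μ : Measure X) : Measure (ι → X) :=
  Measure.pi fun _ => μ

lemma measureReal_iidLaw_forall_mem [Fintype ι] {X : Type*} [MeasurableSpace X] (μ : Measure X)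
    [IsProbabilityMeasure μ] (S : Finset ι) (B : Set X) :
    (iidLaw ι μ).real {ω | ∀ j ∈ S, ω j ∈ B} = μ.real B ^ S.card := by
  rw [measureReal_def, measureReal_def, ← ENNReal.toReal_pow, ← Finset.prod_const,
    ← Measure.pi_pi_finset]
  rfl

variable {X : Type*} [PseudoMetricSpace X]

/-- The vacant set of the coverage process with grains `closedBall (ω j) R`, `j ∈ S`: the points
left uncovered by all the grains. -/
def vacantSet (S : Finset ι) (R : ℝ) (ω : ι → X) : Set X :=
  {x | ∀ j ∈ S, R < dist (ω j) x}

lemma dependsOn_vacantSet (S : Finset ι) (R : ℝ) :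
    DependsOn (vacantSet S R : (ι → X) → Set X) S := by
  intro ω ω' h
  ext x
  exact forall₂_congr fun j hj => by rw [h j hj]

variable [MeasurableSpace X] [OpensMeasurableSpace X]

lemma measureReal_mem_vacantSet [Fintype ι] (μ : Measure X) [IsProbabilityMeasure μ]
    (S : Finset ι) (R : ℝ) (x : X) :
    (iidLaw ι μ).real {ω | x ∈ vacantSet S R ω} = (1 - μ.real (closedBall x R)) ^ S.card := by
  rw [← probReal_compl_eq_one_sub measurableSet_closedBall, ← measureReal_iidLaw_forall_mem]
  simp [vacantSet]

lemma measureReal_mem_mem_vacantSet_le [Fintype ι] (μ : Measure X) [IsProbabilityMeasure μ]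
    (S : Finset ι) {R : ℝ} {x y : X} (hxy : 2 * R < dist x y) :
    (iidLaw ι μ).real {ω | x ∈ vacantSet S R ω ∧ y ∈ vacantSet S R ω} ≤
      (iidLaw ι μ).real {ω | x ∈ vacantSet S R ω} *
        (iidLaw ι μ).real {ω | y ∈ vacantSet S R ω} := by
  have h : {ω : ι → X | x ∈ vacantSet S R ω ∧ y ∈ vacantSet S R ω} =
      {ω | ∀ j ∈ S, ω j ∈ (closedBall x R ∪ closedBall y R)ᶜ} := by
    ext ω
    simp [vacantSet, forall_and]
  rw [h, measureReal_iidLaw_forall_mem, measureReal_mem_vacantSet, measureReal_mem_vacantSet,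
    ← mul_pow, ← probReal_compl_eq_one_sub measurableSet_closedBall,
    ← probReal_compl_eq_one_sub measurableSet_closedBall]
  gcongr
  exact measureReal_compl_union_le_mul measurableSet_closedBall measurableSet_closedBall
    (closedBall_disjoint_closedBall (by linarith))

variable [SecondCountableTopology X]

lemma measurableSet_setOf_mem_vacantSet (S : Finset ι) (R : ℝ) :
    MeasurableSet {z : (ι → X) × X | z.2 ∈ vacantSet S R z.1} := by
  have h : {z : (ι → X) × X | z.2 ∈ vacantSet S R z.1} = ⋂ j ∈ S, {z | R < dist (z.1 j) z.2} := by
    ext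
    simp [vacantSet]
  rw [h]
  exact S.measurableSet_biInter fun j _ => measurableSet_lt measurable_const (by fun_prop)

lemma measurableSet_vacantSet (S : Finset ι) (R : ℝ) (ω : ι → X) :
    MeasurableSet (vacantSet S R ω) :=
  measurable_prodMk_left (measurableSet_setOf_mem_vacantSet S R)

lemma measurable_measureReal_vacantSet (μ : Measure X) [SFinite μ] (S : Finset ι) (R : ℝ) :
    Measurable fun ω : ι → X => μ.real (vacantSet S R ω) :=
  (measurable_measure_prodMk_left (measurableSet_setOf_mem_vacantSet S R)).ennreal_toReal

variable [Fintype ι] {μ : Measure X} [IsProbabilityMeasure μ]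

lemma memLp_measureReal_vacantSet (S : Finset ι) (R : ℝ) (p : ENNReal) :
    MemLp (fun ω => μ.real (vacantSet S R ω)) p (iidLaw ι μ) :=
  .of_bound (measurable_measureReal_vacantSet μ S R).aestronglyMeasurable 1
    (.of_forall fun ω => by
      rw [Real.norm_eq_abs, abs_of_nonneg measureReal_nonneg]
      exact measureReal_le_one)

lemma integrable_measureReal_mem_vacantSet (S : Finset ι) (R : ℝ) :
    Integrable (fun x => (iidLaw ι μ).real {ω | x ∈ vacantSet S R ω}) μ :=
  .of_bound (C := 1) (measurable_measure_prodMk_right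
    (measurableSet_setOf_mem_vacantSet S R)).ennreal_toReal.aestronglyMeasurable
    (.of_forall fun x => by
      rw [Real.norm_eq_abs, abs_of_nonneg measureReal_nonneg]
      exact measureReal_le_one)

lemma integral_measureReal_vacantSet (S : Finset ι) (R : ℝ) :
    ∫ ω, μ.real (vacantSet S R ω) ∂iidLaw ι μ =
      ∫ x, (iidLaw ι μ).real {ω | x ∈ vacantSet S R ω} ∂μ := by
  have hZ := measurableSet_setOf_mem_vacantSet (X := X) S R
  exact (integral_measureReal_prodMk_left hZ).trans (integral_measureReal_prodMk_right hZ).symm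

lemma one_sub_pow_le_integral_measureReal_vacantSet (S : Finset ι) {R v : ℝ}
    (hv : ∀ x, μ.real (closedBall x R) ≤ v) (hv1 : v ≤ 1) :
    (1 - v) ^ S.card ≤ ∫ ω, μ.real (vacantSet S R ω) ∂iidLaw ι μ := by
  rw [integral_measureReal_vacantSet]
  calc (1 - v) ^ S.card = ∫ _, (1 - v) ^ S.card ∂μ := by simp
    _ ≤ _ := integral_mono (integrable_const _) (integrable_measureReal_mem_vacantSet S R)
      fun x => by
        rw [measureReal_mem_vacantSet]
        have : 0 ≤ 1 - v := by linarith
        gcongr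
        exact hv x

lemma integral_measureReal_vacantSet_le (S : Finset ι) {R v : ℝ}
    (hv : ∀ x, v ≤ μ.real (closedBall x R)) :
    ∫ ω, μ.real (vacantSet S R ω) ∂iidLaw ι μ ≤ (1 - v) ^ S.card := by
  rw [integral_measureReal_vacantSet]
  calc _ ≤ ∫ _, (1 - v) ^ S.card ∂μ :=
      integral_mono (integrable_measureReal_mem_vacantSet S R) (integrable_const _) fun x => by
        rw [measureReal_mem_vacantSet]
        have : 0 ≤ 1 - μ.real (closedBall x R) := sub_nonneg.2 measureReal_le_one
        gcongr
        exact hv x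
    _ = (1 - v) ^ S.card := by simp

lemma integral_sq_measureReal_vacantSet (S : Finset ι) (R : ℝ) :
    ∫ ω, μ.real (vacantSet S R ω) ^ 2 ∂iidLaw ι μ =
      ∫ p : X × X, (iidLaw ι μ).real {ω | p.1 ∈ vacantSet S R ω ∧ p.2 ∈ vacantSet S R ω}
        ∂μ.prod μ := by
  have hZ := measurableSet_setOf_mem_vacantSet (X := X) S R
  have hZ₂ : MeasurableSet {z : (ι → X) × X × X |
      z.2.1 ∈ vacantSet S R z.1 ∧ z.2.2 ∈ vacantSet S R z.1} :=
    (hZ.preimage (f := fun z : (ι → X) × X × X => (z.1, z.2.1)) (by fun_prop)).inter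
      (hZ.preimage (f := fun z : (ι → X) × X × X => (z.1, z.2.2)) (by fun_prop))
  simp only [sq, ← measureReal_prod_prod]
  exact (integral_measureReal_prodMk_left hZ₂).trans (integral_measureReal_prodMk_right hZ₂).symm

lemma measureReal_prod_dist_le_le {R w : ℝ} (hw : ∀ x, μ.real (closedBall x R) ≤ w) :
    (μ.prod μ).real {p | dist p.2 p.1 ≤ R} ≤ w := by
  rw [← integral_measureReal_prodMk_left (measurableSet_le (by fun_prop) measurable_const)]
  exact (integral_mono_of_nonneg (g := fun _ => w) (.of_forall fun _ => measureReal_nonneg)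
    (integrable_const _) (.of_forall hw)).trans_eq (by simp)

-- Probes further than `2 * R` apart are nonpositively correlated, since their balls are disjoint.
lemma variance_measureReal_vacantSet_le (S : Finset ι) {R w : ℝ}
    (hw : ∀ x, μ.real (closedBall x (2 * R)) ≤ w) :
    Var[fun ω => μ.real (vacantSet S R ω); iidLaw ι μ] ≤ w := by
  set h : X → ℝ := fun x => (iidLaw ι μ).real {ω | x ∈ vacantSet S R ω}
  set near : Set (X × X) := {p | dist p.2 p.1 ≤ 2 * R} with near_def
  have h_near : MeasurableSet near := measurableSet_le (by fun_prop) measurable_const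
  have h_int : Integrable (fun p : X × X => h p.1 * h p.2) (μ.prod μ) :=
    (integrable_measureReal_mem_vacantSet S R).mul_prod (integrable_measureReal_mem_vacantSet S R)
  have near_int : Integrable (near.indicator (1 : X × X → ℝ)) (μ.prod μ) :=
    (integrable_const 1).indicator h_near
  have pair_le (p : X × X) :
      (iidLaw ι μ).real {ω | p.1 ∈ vacantSet S R ω ∧ p.2 ∈ vacantSet S R ω} ≤
        h p.1 * h p.2 + near.indicator 1 p := by
    by_cases hp : p ∈ near
    · simpa [hp] using measureReal_le_one.trans
        (le_add_of_nonneg_left (mul_nonneg measureReal_nonneg measureReal_nonneg))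
    · simpa [hp] using
        measureReal_mem_mem_vacantSet_le μ S (by simpa [near_def, dist_comm] using hp)
  have second_moment : ∫ ω, μ.real (vacantSet S R ω) ^ 2 ∂iidLaw ι μ ≤ (∫ x, h x ∂μ) ^ 2 + w :=
    calc ∫ ω, μ.real (vacantSet S R ω) ^ 2 ∂iidLaw ι μ
        ≤ ∫ p : X × X, h p.1 * h p.2 + near.indicator 1 p ∂μ.prod μ := by
          rw [integral_sq_measureReal_vacantSet]
          exact integral_mono_of_nonneg (.of_forall fun _ => measureReal_nonneg)
            (h_int.add near_int) (.of_forall pair_le)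
      _ = (∫ x, h x ∂μ) ^ 2 + (μ.prod μ).real near := by
          rw [integral_add h_int near_int, integral_prod_mul, integral_indicator_one h_near, sq]
      _ ≤ (∫ x, h x ∂μ) ^ 2 + w := by
          gcongr
          exact measureReal_prod_dist_le_le hw
  rw [variance_eq_sub (memLp_measureReal_vacantSet S R 2), integral_measureReal_vacantSet,
    sub_le_iff_le_add']
  exact second_moment

lemma measureReal_vacantSet_lt_le (S : Finset ι) {R v w t : ℝ}
    (hv : ∀ x, μ.real (closedBall x R) ≤ v) (hv1 : v ≤ 1)
    (hw : ∀ x, μ.real (closedBall x (2 * R)) ≤ w) (ht : 0 < t)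
    (htv : 2 * t ≤ (1 - v) ^ S.card) :
    (iidLaw ι μ).real {ω | μ.real (vacantSet S R ω) < t} ≤ w / t ^ 2 := by
  refine (measureReal_lt_le_variance_div_sq (memLp_measureReal_vacantSet S R 2) ht
    (htv.trans (one_sub_pow_le_integral_measureReal_vacantSet S hv hv1))).trans ?_
  gcongr
  exact variance_measureReal_vacantSet_le S hw

lemma measureReal_le_vacantSet_le (S : Finset ι) {R v : ℝ} (hv0 : 0 < v)
    (hv : ∀ x, v ≤ μ.real (closedBall x R)) :
    (iidLaw ι μ).real {ω | v ≤ μ.real (vacantSet S R ω)} ≤ (1 - v) ^ S.card / v := by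
  rw [le_div_iff₀' hv0]
  exact (mul_meas_ge_le_integral_of_nonneg (.of_forall fun _ => measureReal_nonneg)
    ((memLp_measureReal_vacantSet S R 1).integrable le_rfl) v).trans
    (integral_measureReal_vacantSet_le S hv)

-- A point lying at distance more than `2 * r` from all the sample points has its whole `r`-ball
-- vacant, so Markov's inequality for the vacancy replaces a union bound over a net.
lemma measureReal_exists_forall_two_mul_lt_dist_le {r v : ℝ} (hv0 : 0 < v)
    (hv : ∀ x, v ≤ μ.real (closedBall x r)) :
    (iidLaw ι μ).real {ω | ∃ x, ∀ j, 2 * r < dist (ω j) x} ≤ (1 - v) ^ Fintype.card ι / v := by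
  refine (measureReal_mono ?_).trans (measureReal_le_vacantSet_le Finset.univ hv0 hv)
  rintro ω ⟨x, hx⟩
  refine (hv x).trans (measureReal_mono fun y hy j _ => ?_)
  linarith [hx j, mem_closedBall.1 hy, dist_triangle (ω j) y x]

lemma measureReal_forall_notMem_vacantSet_le {S G : Finset ι} (hSG : Disjoint S G) (R : ℝ) {t : ℝ}
    (ht1 : t ≤ 1) :
    (iidLaw ι μ).real {ω | t ≤ μ.real (vacantSet S R ω) ∧ ∀ i ∈ G, ω i ∉ vacantSet S R ω} ≤
      (1 - t) ^ G.card := by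
  have hSG' : Disjoint (G : Set ι) S := Finset.disjoint_coe.2 hSG.symm
  have hA : MeasurableSet {ω : ι → X | t ≤ μ.real (vacantSet S R ω)} :=
    measurableSet_le measurable_const (measurable_measureReal_vacantSet μ S R)
  have hB : MeasurableSet {ω : ι → X | ∀ i ∈ G, ω i ∉ vacantSet S R ω} := by
    have h (i : ι) : MeasurableSet {ω : ι → X | ω i ∉ vacantSet S R ω} :=
      ((measurableSet_setOf_mem_vacantSet S R).preimage
        (f := fun ω : ι → X => (ω, ω i)) (by fun_prop)).compl
    simp only [Set.ofPred_forall]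
    exact G.measurableSet_biInter fun i _ => h i
  have h1t : 0 ≤ (1 - t) ^ G.card := pow_nonneg (by linarith) _
  have hAS : DependsOn (· ∈ {ω : ι → X | t ≤ μ.real (vacantSet S R ω)}) S := fun ω ω' h => by
    simp only [Set.mem_ofPred_eq, dependsOn_vacantSet S R h]
  refine (measureReal_pi_inter_le_mul_of_dependsOn hSG' hA hB hAS h1t fun ω hω => ?_).trans
    (mul_le_of_le_one_right h1t measureReal_le_one)
  have h_section : {y | Function.updateFinset ω G y ∈ {ω | ∀ i ∈ G, ω i ∉ vacantSet S R ω}} =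
      {y : G → X | ∀ i ∈ Finset.univ, y i ∈ (vacantSet S R ω)ᶜ} := by
    ext y
    have h_vacant : vacantSet S R (Function.updateFinset ω G y) = vacantSet S R ω :=
      dependsOn_vacantSet S R fun j hj => by
        simp [Function.updateFinset, Finset.disjoint_left.1 hSG (Finset.mem_coe.1 hj)]
    simp +contextual [h_vacant, Function.updateFinset]
  rw [h_section, measureReal_iidLaw_forall_mem, Finset.card_univ, Fintype.card_coe,
    probReal_compl_eq_one_sub (measurableSet_vacantSet S R ω)]
  gcongr
  · exact sub_nonneg.2 measureReal_le_one
  · exact hω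

lemma measureReal_inter_dist_le_le {A : Set (ι → X)} (hA : MeasurableSet A) {T : Set ι}
    (hAT : DependsOn (· ∈ A) T) {i j : ι} (hij : i ≠ j) (hj : j ∉ T) {R v : ℝ}
    (hv : ∀ x, μ.real (closedBall x R) ≤ v) :
    (iidLaw ι μ).real (A ∩ {ω | dist (ω j) (ω i) ≤ R}) ≤ v * (iidLaw ι μ).real A := by
  have hB : MeasurableSet {ω : ι → X | dist (ω j) (ω i) ≤ R} :=
    measurableSet_le (by fun_prop) measurable_const
  refine measureReal_pi_inter_le_mul_of_dependsOn (G := {j}) (by simpa using hj) hA hB hAT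
    (measureReal_nonneg.trans (hv μ.nonempty_of_neZero.some)) fun ω _ => ?_
  have h_section : {y | Function.updateFinset ω {j} y ∈ {ω | dist (ω j) (ω i) ≤ R}} =
      {y : ({j} : Finset ι) → X | ∀ k ∈ Finset.univ, y k ∈ closedBall (ω i) R} := by
    ext y
    simp only [Set.mem_ofPred_eq, Function.updateFinset, Finset.mem_singleton, ↓reduceDIte, hij,
      Finset.univ_unique, mem_closedBall, forall_eq]
    rfl
  rw [h_section, measureReal_iidLaw_forall_mem]
  simpa using hv (ω i)

lemma measureReal_exists_ne_dist_le_le (G : Finset ι) {R v : ℝ}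
    (hv : ∀ x, μ.real (closedBall x R) ≤ v) :
    (iidLaw ι μ).real {ω | ∃ i ∈ G, ∃ j ∈ G, i ≠ j ∧ dist (ω j) (ω i) ≤ R} ≤ G.card ^ 2 * v := by
  have pair_le (p : ι × ι) (hp : p ∈ G.offDiag) :
      (iidLaw ι μ).real {ω | dist (ω p.2) (ω p.1) ≤ R} ≤ v := by
    simpa using measureReal_inter_dist_le_le .univ (T := ∅) (by simp [DependsOn])
      (Finset.mem_offDiag.1 hp).2.2 (Set.notMem_empty _) hv
  have subset_biUnion : {ω : ι → X | ∃ i ∈ G, ∃ j ∈ G, i ≠ j ∧ dist (ω j) (ω i) ≤ R} ⊆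
      ⋃ p ∈ G.offDiag, {ω | dist (ω p.2) (ω p.1) ≤ R} := by
    rintro ω ⟨i, hi, j, hj, hij, h⟩
    exact Set.mem_biUnion (x := (i, j)) (by simp [hi, hj, hij]) h
  have hv0 : 0 ≤ v := measureReal_nonneg.trans (hv μ.nonempty_of_neZero.some)
  calc _ ≤ _ := measureReal_mono subset_biUnion (measure_ne_top _ _)
    _ ≤ ∑ p ∈ G.offDiag, (iidLaw ι μ).real {ω | dist (ω p.2) (ω p.1) ≤ R} :=
      measureReal_biUnion_finset_le _ _
    _ ≤ G.offDiag.card * v := by simpa using Finset.sum_le_sum pair_le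
    _ ≤ G.card ^ 2 * v := by
      gcongr
      exact_mod_cast (G.offDiag_card.trans_le (Nat.sub_le _ _)).trans_eq (sq _).symm

lemma measureReal_forall_exists_dist_le_le {S G : Finset ι} (hSG : Disjoint S G)
    {R v w t : ℝ} (hv : ∀ x, μ.real (closedBall x R) ≤ v) (hv1 : v ≤ 1)
    (hw : ∀ x, μ.real (closedBall x (2 * R)) ≤ w) (ht : 0 < t) (ht1 : t ≤ 1)
    (htv : 2 * t ≤ (1 - v) ^ S.card) :
    (iidLaw ι μ).real {ω | ∀ i ∈ G, ∃ j ∈ S ∪ G, j ≠ i ∧ dist (ω j) (ω i) ≤ R} ≤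
      w / t ^ 2 + (1 - t) ^ G.card + G.card ^ 2 * v := by
  have subset_union : {ω : ι → X | ∀ i ∈ G, ∃ j ∈ S ∪ G, j ≠ i ∧ dist (ω j) (ω i) ≤ R} ⊆
      {ω | μ.real (vacantSet S R ω) < t} ∪
      {ω | t ≤ μ.real (vacantSet S R ω) ∧ ∀ i ∈ G, ω i ∉ vacantSet S R ω} ∪
      {ω | ∃ i ∈ G, ∃ j ∈ G, i ≠ j ∧ dist (ω j) (ω i) ≤ R} := by
    intro ω hω
    by_contra h
    simp only [Set.mem_union, Set.mem_ofPred_eq, not_or] at h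
    obtain ⟨⟨h_vacancy, h_hit⟩, h_sep⟩ := h
    push Not at h_vacancy h_hit h_sep
    obtain ⟨i, hiG, hi⟩ := h_hit h_vacancy
    obtain ⟨j, hj, hji, hdist⟩ := hω i hiG
    rcases Finset.mem_union.1 hj with hjS | hjG
    · exact (hi j hjS).not_ge hdist
    · exact (h_sep i hiG j hjG hji.symm).not_ge hdist
  calc _ ≤ _ := measureReal_mono subset_union
    _ ≤ _ := (measureReal_union_le _ _).trans (add_le_add_left (measureReal_union_le _ _) _)
    _ ≤ _ := by
      gcongr
      · exact measureReal_vacantSet_lt_le S hv hv1 hw ht htv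
      · exact measureReal_forall_notMem_vacantSet_le hSG R ht1
      · exact measureReal_exists_ne_dist_le_le G hv

-- The index `i` is a function of the points with index at most `i`, so every later point is
-- independent of the event that `i` is selected.
lemma measureReal_exists_isLeast_dist_le_le [LinearOrder ι] {p : ι → (ι → X) → Prop}
    (hp : ∀ i, MeasurableSet {ω | p i ω}) (hp_dep : ∀ i, DependsOn (p i) (Set.Iic i))
    (J : Finset ι) {R v : ℝ} (hv : ∀ x, μ.real (closedBall x R) ≤ v) :
    (iidLaw ι μ).real
        {ω | ∃ i, IsLeast {k | p k ω} i ∧ ∃ j ∈ J, i < j ∧ dist (ω j) (ω i) ≤ R} ≤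
      J.card * v := by
  have hv0 : 0 ≤ v := measureReal_nonneg.trans (hv μ.nonempty_of_neZero.some)
  set selected : ι → Set (ι → X) := fun i => {ω | IsLeast {k | p k ω} i}
  have h_selected (i : ι) : MeasurableSet (selected i) := measurableSet_isLeast hp i
  have subset_iUnion :
      {ω : ι → X | ∃ i, IsLeast {k | p k ω} i ∧ ∃ j ∈ J, i < j ∧ dist (ω j) (ω i) ≤ R} ⊆
      ⋃ i, ⋃ j ∈ J.filter (i < ·), selected i ∩ {ω | dist (ω j) (ω i) ≤ R} := by
    rintro ω ⟨i, hi, j, hj, hij, h⟩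
    exact Set.mem_iUnion.2 ⟨i, Set.mem_biUnion (Finset.mem_filter.2 ⟨hj, hij⟩) ⟨hi, h⟩⟩
  have selected_le (i : ι) :
      (iidLaw ι μ).real (⋃ j ∈ J.filter (i < ·), selected i ∩ {ω | dist (ω j) (ω i) ≤ R}) ≤
        J.card * v * (iidLaw ι μ).real (selected i) := by
    calc _ ≤ ∑ j ∈ J.filter (i < ·),
          (iidLaw ι μ).real (selected i ∩ {ω | dist (ω j) (ω i) ≤ R}) :=
        measureReal_biUnion_finset_le _ _
      _ ≤ ∑ _j ∈ J.filter (i < ·), v * (iidLaw ι μ).real (selected i) :=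
        Finset.sum_le_sum fun j hj => have hij := (Finset.mem_filter.1 hj).2
          measureReal_inter_dist_le_le (h_selected i) (dependsOn_isLeast hp_dep i) hij.ne
            hij.not_ge hv
      _ ≤ J.card * v * (iidLaw ι μ).real (selected i) := by
        rw [Finset.sum_const, nsmul_eq_mul, ← mul_assoc]
        gcongr
        exact J.filter_subset _
  calc _ ≤ _ := measureReal_mono subset_iUnion (measure_ne_top _ _)
    _ ≤ ∑ i, J.card * v * (iidLaw ι μ).real (selected i) :=
      (measureReal_iUnion_fintype_le _).trans (Finset.sum_le_sum fun i _ => selected_le i)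
    _ = J.card * v * (iidLaw ι μ).real (⋃ i, selected i) := by
      rw [← Finset.mul_sum, measureReal_iUnion_fintype (pairwise_disjoint_isLeast p) h_selected]
    _ ≤ J.card * v := mul_le_of_le_one_right (by positivity) measureReal_le_one

end Sample

section Torus

instance : IsProbabilityMeasure (volume : Measure (AddCircle (1 : ℝ))) :=
  ⟨by rw [AddCircle.measure_univ, ENNReal.ofReal_one]⟩

instance : IsProbabilityMeasure (volume : Measure T2) :=
  inferInstanceAs (IsProbabilityMeasure
    ((volume : Measure (AddCircle (1 : ℝ))).prod (volume : Measure (AddCircle (1 : ℝ)))))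

lemma volumeReal_closedBall_T2 (x : T2) {r : ℝ} (hr : 0 ≤ r) :
    volume.real (closedBall x r) = min 1 (2 * r) ^ 2 := by
  rw [← Prod.mk.eta (p := x), ← closedBall_prod_same]
  change ((volume : Measure (AddCircle (1 : ℝ))).prod volume).real _ = _
  rw [measureReal_prod_prod, measureReal_def, measureReal_def, AddCircle.volume_closedBall,
    AddCircle.volume_closedBall, ENNReal.toReal_ofReal (by positivity), sq]

lemma volumeReal_closedBall_T2_le (x : T2) {r : ℝ} (hr : 0 ≤ r) :
    volume.real (closedBall x r) ≤ (2 * r) ^ 2 := by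
  rw [volumeReal_closedBall_T2 x hr]
  gcongr
  exact min_le_right _ _

lemma volumeReal_closedBall_T2_of_le_half (x : T2) {r : ℝ} (hr : 0 ≤ r) (hr2 : r ≤ 1 / 2) :
    volume.real (closedBall x r) = (2 * r) ^ 2 := by
  rw [volumeReal_closedBall_T2 x hr, min_eq_right (by linarith)]

lemma dist_le_dT (p q : T2) : dist p q ≤ dT p q := by
  rw [Prod.dist_eq]
  exact max_le (Real.le_sqrt_of_sq_le (le_add_of_nonneg_right (sq_nonneg _)))
    (Real.le_sqrt_of_sq_le (le_add_of_nonneg_left (sq_nonneg _)))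

lemma dT_le_two_mul_dist (p q : T2) : dT p q ≤ 2 * dist p q := by
  have h₁ : dist p.1 q.1 ≤ dist p q := le_max_left _ _
  have h₂ : dist p.2 q.2 ≤ dist p q := le_max_right _ _
  rw [dT, Real.sqrt_le_iff]
  refine ⟨by positivity, ?_⟩
  calc dist p.1 q.1 ^ 2 + dist p.2 q.2 ^ 2 ≤ dist p q ^ 2 + dist p q ^ 2 := by gcongr
    _ ≤ (2 * dist p q) ^ 2 := by nlinarith [sq_nonneg (dist p q)]

lemma closedBall_subset_vor {P : Set T2} {p : T2} {R : ℝ} (h : ∀ q ∈ P, q ≠ p → R < dT q p) :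
    closedBall p (R / 6) ⊆ vor p P := by
  intro x hx q hq
  rcases eq_or_ne q p with rfl | hqp
  · exact le_rfl
  · have hx := mem_closedBall.1 hx
    linarith [h q hq hqp, dT_le_two_mul_dist q p, dist_triangle_left q p x,
      dT_le_two_mul_dist x p, dist_le_dT x q]

lemma vor_subset_closedBall {P : Set T2} {ρ : ℝ} (h : ∀ x, ∃ q ∈ P, dist q x ≤ ρ) (p : T2) :
    vor p P ⊆ closedBall p (2 * ρ) := by
  intro x hx
  obtain ⟨q, hqP, hq⟩ := h x
  rw [mem_closedBall]
  linarith [dist_le_dT x p, hx q hqP, dT_le_two_mul_dist x q, dist_comm x q]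

lemma le_volume_vor {P : Set T2} {p : T2} {R : ℝ} (hR : 0 ≤ R) (hR3 : R ≤ 3)
    (h : ∀ q ∈ P, q ≠ p → R < dT q p) : ENNReal.ofReal ((R / 3) ^ 2) ≤ volume (vor p P) := by
  refine le_trans ?_ (measure_mono (closedBall_subset_vor h))
  rw [ENNReal.ofReal_le_iff_le_toReal (measure_ne_top _ _), ← measureReal_def,
    volumeReal_closedBall_T2_of_le_half p (by positivity) (by linarith)]
  exact le_of_eq (by ring)

lemma volume_vor_le {P : Set T2} {ρ : ℝ} (hρ : 0 ≤ ρ) (h : ∀ x, ∃ q ∈ P, dist q x ≤ ρ) (p : T2) :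
    volume (vor p P) ≤ ENNReal.ofReal ((4 * ρ) ^ 2) := by
  refine (measure_mono (vor_subset_closedBall h p)).trans ?_
  rw [ENNReal.le_ofReal_iff_toReal_le (measure_ne_top _ _) (by positivity), ← measureReal_def]
  exact (volumeReal_closedBall_T2_le p (by positivity)).trans_eq (by ring)

end Torus

section Selection

variable {n : ℕ}

/-- The `i`-th point is acceptable to the player: it is among the last `f` points, and no earlier
point lies within `R` of it. The player selects the first acceptable point. -/
def IsAcceptable (f : ℕ) (R : ℝ) (ω : Fin n → T2) (i : Fin n) : Prop :=
  n - f ≤ (i : ℕ) ∧ ∀ j < i, R < dT (ω j) (ω i)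

lemma exists_isLeast_selPoint_eq {f : ℕ} {R : ℝ} {ω : Fin n → T2}
    (h : ∃ i, IsAcceptable f R ω i) :
    ∃ i, IsLeast {k | IsAcceptable f R ω k} i ∧ selPoint n f R ω = ω i := by
  have h_nonempty : (Finset.univ.filter fun i : Fin n =>
      n - f ≤ (i : ℕ) ∧ ∀ j : Fin n, j < i → R < dT (ω j) (ω i)).Nonempty := by
    simpa [Finset.Nonempty, IsAcceptable] using h
  refine ⟨_, ?_, by rw [selPoint, dif_pos h_nonempty]⟩
  simpa [IsAcceptable] using Finset.isLeast_min' _ h_nonempty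

lemma measurableSet_isAcceptable (f : ℕ) (R : ℝ) (i : Fin n) :
    MeasurableSet {ω : Fin n → T2 | IsAcceptable f R ω i} := by
  have h_dT (j : Fin n) : Measurable fun ω : Fin n → T2 => dT (ω j) (ω i) := by
    unfold dT
    fun_prop
  have h_eq : {ω : Fin n → T2 | IsAcceptable f R ω i} =
      {_ω | n - f ≤ (i : ℕ)} ∩ ⋂ j, ⋂ (_ : j < i), {ω | R < dT (ω j) (ω i)} := by
    ext
    simp [IsAcceptable]
  rw [h_eq]
  exact (MeasurableSet.const _).inter
    (.iInter fun j => .iInter fun _ => measurableSet_lt measurable_const (h_dT j))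

lemma dependsOn_isAcceptable (f : ℕ) (R : ℝ) (i : Fin n) :
    DependsOn (fun ω : Fin n → T2 => IsAcceptable f R ω i) (Set.Iic i) := by
  intro ω ω' h
  refine propext (and_congr_right fun _ => forall₂_congr fun j hj => ?_)
  rw [h i Set.self_mem_Iic, h j (Set.mem_Iic.2 hj.le)]

lemma measureReal_forall_not_isAcceptable_le {f g : ℕ} {R t : ℝ} (hgf : g ≤ f) (hgn : g ≤ n)
    (hR : 0 ≤ R) (hR1 : (2 * R) ^ 2 ≤ 1) (ht : 0 < t) (htn : 2 * t ≤ (1 - (2 * R) ^ 2) ^ n) :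
    (iidLaw (Fin n) volume).real {ω | ∀ i, ¬ IsAcceptable f R ω i} ≤
      (4 * R) ^ 2 / t ^ 2 + (1 - t) ^ g + g ^ 2 * (2 * R) ^ 2 := by
  set S : Finset (Fin n) := (Finset.range (n - f)).attachFin fun k hk => by
    have := Finset.mem_range.1 hk; omega
  set G : Finset (Fin n) := (Finset.Ico (n - f) (n - f + g)).attachFin fun k hk => by
    have := Finset.mem_Ico.1 hk; omega
  have hSG : Disjoint S G := Finset.disjoint_left.2 fun k hS hG => by
    simp only [S, G, Finset.mem_attachFin, Finset.mem_range, Finset.mem_Ico] at hS hG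
    omega
  have hG_card : G.card = g := by simp [G]
  have hq : 0 ≤ 1 - (2 * R) ^ 2 := by linarith
  have hq1 : 1 - (2 * R) ^ 2 ≤ 1 := by linarith [sq_nonneg (2 * R)]
  have htS : 2 * t ≤ (1 - (2 * R) ^ 2) ^ S.card :=
    htn.trans (pow_le_pow_of_le_one hq hq1 (by simp [S]))
  have ht1 : t ≤ 1 := by linarith [pow_le_one₀ (n := n) hq hq1]
  have hw (x : T2) : volume.real (closedBall x (2 * R)) ≤ (4 * R) ^ 2 :=
    (volumeReal_closedBall_T2_le x (by positivity)).trans_eq (by ring)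
  have key := measureReal_forall_exists_dist_le_le hSG
    (fun x => volumeReal_closedBall_T2_le x hR) hR1 hw ht ht1 htS
  rw [hG_card] at key
  refine (measureReal_mono fun ω hω i hiG => ?_).trans key
  have hi : n - f ≤ (i : ℕ) ∧ (i : ℕ) < n - f + g := by simpa [G] using hiG
  obtain ⟨j, hji, hdT⟩ : ∃ j < i, dT (ω j) (ω i) ≤ R := by
    simpa [IsAcceptable, hi.1] using hω i
  refine ⟨j, ?_, hji.ne, (dist_le_dT _ _).trans hdT⟩
  have : (j : ℕ) < i := hji
  simp only [S, G, Finset.mem_union, Finset.mem_attachFin, Finset.mem_range, Finset.mem_Ico]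
  omega

lemma measureReal_exists_isLeast_isAcceptable_dist_le_le (f : ℕ) {R : ℝ} (hR : 0 ≤ R) :
    (iidLaw (Fin n) volume).real
        {ω | ∃ i, IsLeast {k | IsAcceptable f R ω k} i ∧ ∃ j > i, dist (ω j) (ω i) ≤ R} ≤
      f * (2 * R) ^ 2 := by
  set J : Finset (Fin n) := (Finset.Ico (n - f) n).attachFin fun k hk => (Finset.mem_Ico.1 hk).2
  have key := measureReal_exists_isLeast_dist_le_le (measurableSet_isAcceptable f R)
    (dependsOn_isAcceptable f R) J fun x => volumeReal_closedBall_T2_le x hR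
  refine (measureReal_mono ?_).trans (key.trans ?_)
  · rintro ω ⟨i, hi, j, hij, hdist⟩
    have : n - f ≤ (j : ℕ) := hi.1.1.trans (Fin.le_def.1 hij.le)
    exact ⟨i, hi, j, by simpa [J] using this, hij, hdist⟩
  · gcongr
    simp only [J, Finset.card_attachFin, Nat.card_Ico]
    omega

lemma measureReal_exists_forall_two_mul_lt_dist_T2_le {r : ℝ} (hr : 0 < r) (hr2 : r ≤ 1 / 2) :
    (iidLaw (Fin n) (volume : Measure T2)).real {ω | ∃ x, ∀ j, 2 * r < dist (ω j) x} ≤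
      (1 - (2 * r) ^ 2) ^ n / (2 * r) ^ 2 := by
  simpa using measureReal_exists_forall_two_mul_lt_dist_le (ι := Fin n) (by positivity)
    fun x => (volumeReal_closedBall_T2_of_le_half x hr.le hr2).ge

/-- The event that the selected cell has area at least `α` and every cell has area at most `β`. -/
def competitiveEvent (n f : ℕ) (R α β : ℝ) : Set (Fin n → T2) :=
  {ω | ENNReal.ofReal α ≤ volume (vor (selPoint n f R ω) (Set.range ω)) ∧
    ∀ i, volume (vor (ω i) (Set.range ω)) ≤ ENNReal.ofReal β}

lemma compl_competitiveEvent_subset (f : ℕ) {R r : ℝ} (hR : 0 ≤ R) (hR3 : R ≤ 3) (hr : 0 ≤ r) :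
    (competitiveEvent n f R ((R / 3) ^ 2) ((8 * r) ^ 2))ᶜ ⊆
      {ω | ∃ x, ∀ j, 2 * r < dist (ω j) x} ∪ {ω | ∀ i, ¬ IsAcceptable f R ω i} ∪
      {ω | ∃ i, IsLeast {k | IsAcceptable f R ω k} i ∧ ∃ j > i, dist (ω j) (ω i) ≤ R} := by
  rw [Set.compl_subset_comm]
  intro ω hω
  simp only [Set.mem_compl_iff, Set.mem_union, Set.mem_ofPred_eq, not_or] at hω
  obtain ⟨⟨h_net, h_acceptable⟩, h_later⟩ := hω
  push Not at h_net h_acceptable h_later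
  obtain ⟨i, hi, h_sel⟩ := exists_isLeast_selPoint_eq h_acceptable
  refine ⟨?_, fun k => ?_⟩
  · rw [h_sel]
    refine le_volume_vor hR hR3 ?_
    rintro _ ⟨j, rfl⟩ hj
    rcases lt_trichotomy j i with hji | rfl | hij
    · exact hi.1.2 j hji
    · exact absurd rfl hj
    · exact (h_later i hi j hij).trans_le (dist_le_dT _ _)
  · have h_cell := volume_vor_le (P := Set.range ω) (ρ := 2 * r) (by positivity)
      (by simpa using h_net) (ω k)
    rwa [← mul_assoc, show (4 * 2 : ℝ) = 8 by norm_num] at h_cell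

lemma measureReal_compl_competitiveEvent_le {f g : ℕ} {R r t : ℝ} (hgf : g ≤ f) (hgn : g ≤ n)
    (hR : 0 ≤ R) (hR1 : (2 * R) ^ 2 ≤ 1) (hr : 0 < r) (hr2 : r ≤ 1 / 2) (ht : 0 < t)
    (htn : 2 * t ≤ (1 - (2 * R) ^ 2) ^ n) :
    (iidLaw (Fin n) volume).real (competitiveEvent n f R ((R / 3) ^ 2) ((8 * r) ^ 2))ᶜ ≤
      (1 - (2 * r) ^ 2) ^ n / (2 * r) ^ 2 +
        ((4 * R) ^ 2 / t ^ 2 + (1 - t) ^ g + g ^ 2 * (2 * R) ^ 2) + f * (2 * R) ^ 2 :=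
  calc _ ≤ _ := measureReal_mono (compl_competitiveEvent_subset f hR (by nlinarith) hr.le)
    _ ≤ _ := (measureReal_union_le _ _).trans (add_le_add_left (measureReal_union_le _ _) _)
    _ ≤ _ := by
      gcongr
      · exact measureReal_exists_forall_two_mul_lt_dist_T2_le hr hr2
      · exact measureReal_forall_not_isAcceptable_le hgf hgn hR hR1 ht htn
      · exact measureReal_exists_isLeast_isAcceptable_dist_le_le f hR

end Selection

section Asymptotics

lemma exp_neg_two_mul_le_one_sub {x : ℝ} (hx0 : 0 ≤ x) (hx : x ≤ 1 / 2) :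
    Real.exp (-(2 * x)) ≤ 1 - x := by
  have h_pos : 0 < 1 - x := by linarith
  have h_inv : (1 - x)⁻¹ ≤ 1 + 2 * x := by
    rw [inv_le_iff_one_le_mul₀ h_pos]
    nlinarith
  rw [← Real.le_log_iff_exp_le h_pos]
  linarith [Real.one_sub_inv_le_log_of_pos h_pos]

lemma exp_neg_two_mul_le_one_sub_div_pow {n : ℕ} (hn : n ≠ 0) {x : ℝ} (hx0 : 0 ≤ x)
    (hxn : 2 * x ≤ n) : Real.exp (-(2 * x)) ≤ (1 - x / n) ^ n := by
  have hn0 : (0 : ℝ) < n := by positivity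
  calc Real.exp (-(2 * x)) = Real.exp (-(2 * (x / n))) ^ n := by
        rw [← Real.exp_nat_mul]
        field_simp
    _ ≤ (1 - x / n) ^ n := by
        gcongr
        exact exp_neg_two_mul_le_one_sub (by positivity) (by rw [div_le_iff₀ hn0]; linarith)

lemma one_sub_pow_le_exp_neg_mul {x : ℝ} (hx : x ≤ 1) (k : ℕ) :
    (1 - x) ^ k ≤ Real.exp (-(k * x)) := by
  rw [← mul_neg, Real.exp_nat_mul]
  gcongr
  exact Real.one_sub_le_exp_neg x

lemma exp_neg_natCast_mul_log {w : ℝ} (hw : 0 < w) (k : ℕ) :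
    Real.exp (-(k * Real.log w)) = (w ^ k)⁻¹ := by
  rw [Real.exp_neg, Real.exp_nat_mul, Real.exp_log hw]

lemma natCast_ceil_le_two_mul {x : ℝ} (hx : 1 ≤ x) : (⌈x⌉₊ : ℝ) ≤ 2 * x := by
  linarith [Nat.ceil_lt_add_one (zero_le_one.trans hx)]

variable {n : ℕ} {w : ℝ}

lemma half_le_log (hw : 2 ≤ w) : 1 / 2 ≤ Real.log w := by
  linarith [Real.log_two_gt_d9, Real.log_le_log two_pos hw]

lemma thirtyTwo_mul_log_le_pow_eight (hw : 2 ≤ w) : 32 * Real.log w ≤ w ^ 8 :=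
  calc 32 * Real.log w ≤ 2 ^ 7 * w := by
        linarith [Real.log_le_sub_one_of_pos (by linarith : 0 < w)]
    _ ≤ w ^ 7 * w := by gcongr
    _ = w ^ 8 := by ring

-- The next five lemmas bound, in order, the terms of `measureReal_compl_competitiveEvent_le` for
-- `n = w ^ 8`, `r = √(log n / n)`, `R = r / 8`, `t = 1 / (2 * w)` and `g = ⌈8 * w * log w⌉`.
lemma net_failure_le (hw : 2 ≤ w) (hn : w ^ 8 = n) :
    (1 - 32 * Real.log w / w ^ 8) ^ n / (32 * Real.log w / w ^ 8) ≤ Real.log w ^ 2 / w ^ 4 := by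
  have hlog := half_le_log hw
  have h_exp : (1 - 32 * Real.log w / w ^ 8) ^ n ≤ (w ^ 32)⁻¹ := by
    rw [← exp_neg_natCast_mul_log (by linarith), hn]
    exact Real.one_sub_div_pow_le_exp_neg (hn ▸ thirtyTwo_mul_log_le_pow_eight hw)
  calc _ ≤ (w ^ 32)⁻¹ / (32 * Real.log w / w ^ 8) := by gcongr
    _ = 1 / (32 * Real.log w) / w ^ 24 := by field_simp
    _ ≤ Real.log w ^ 2 / w ^ 4 := by
      gcongr
      · rw [div_le_iff₀ (by positivity)]
        nlinarith [pow_le_pow_left₀ (by norm_num) hlog 3]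
      · linarith
      · norm_num

lemma vacancy_failure_le (hw : 2 ≤ w) :
    2 * Real.log w / w ^ 8 / (1 / (2 * w)) ^ 2 ≤ 4 * Real.log w ^ 2 / w ^ 4 := by
  have hlog := half_le_log hw
  calc _ = 2 * Real.log w * (4 / w ^ 2) / w ^ 4 := by field_simp; norm_num
    _ ≤ 2 * Real.log w * (2 * Real.log w) / w ^ 4 := by
      gcongr
      rw [div_le_iff₀ (by positivity)]
      nlinarith
    _ = _ := by ring

lemma hit_failure_le (hw : 2 ≤ w) :
    (1 - 1 / (2 * w)) ^ ⌈8 * w * Real.log w⌉₊ ≤ 4 * Real.log w ^ 2 / w ^ 4 := by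
  have hlog := half_le_log hw
  calc (1 - 1 / (2 * w)) ^ ⌈8 * w * Real.log w⌉₊
      ≤ Real.exp (-(⌈8 * w * Real.log w⌉₊ * (1 / (2 * w)))) := by
        refine one_sub_pow_le_exp_neg_mul ?_ _
        rw [div_le_one (by positivity)]
        linarith
    _ ≤ Real.exp (-(8 * w * Real.log w * (1 / (2 * w)))) := by
        gcongr
        exact Nat.le_ceil _
    _ = 1 / w ^ 4 := by
        rw [one_div (w ^ 4), ← exp_neg_natCast_mul_log (by linarith)]
        congr 1
        field_simp
        push_cast
        ring
    _ ≤ 4 * Real.log w ^ 2 / w ^ 4 := by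
        gcongr
        nlinarith

lemma separation_failure_le (hw : 2 ≤ w) :
    (⌈8 * w * Real.log w⌉₊ : ℝ) ^ 2 * (Real.log w / (2 * w ^ 8)) ≤
      128 * Real.log w ^ 2 / w ^ 4 := by
  have hlog := half_le_log hw
  calc _ ≤ (2 * (8 * w * Real.log w)) ^ 2 * (Real.log w / (2 * w ^ 8)) := by
        gcongr
        exact natCast_ceil_le_two_mul (by nlinarith)
    _ = 128 * Real.log w ^ 2 * (Real.log w / w ^ 2) / w ^ 4 := by field_simp; norm_num
    _ ≤ 128 * Real.log w ^ 2 * 1 / w ^ 4 := by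
        gcongr
        rw [div_le_one (by positivity)]
        nlinarith [Real.log_le_sub_one_of_pos (by linarith : 0 < w)]
    _ = _ := by rw [mul_one]

lemma spoiled_failure_le (hw : 2 ≤ w) :
    ⌈8 * w ^ 4 * Real.log w⌉₊ * (Real.log w / (2 * w ^ 8)) ≤ 8 * Real.log w ^ 2 / w ^ 4 := by
  have hlog := half_le_log hw
  have hw4 : 2 ^ 4 ≤ w ^ 4 := by gcongr
  calc _ ≤ 2 * (8 * w ^ 4 * Real.log w) * (Real.log w / (2 * w ^ 8)) := by
        gcongr
        exact natCast_ceil_le_two_mul (by nlinarith)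
    _ = _ := by field_simp

lemma two_mul_one_div_le_one_sub_pow (hw : 2 ≤ w) (hn : w ^ 8 = n) :
    2 * (1 / (2 * w)) ≤ (1 - Real.log w / (2 * w ^ 8)) ^ n := by
  have hlog := half_le_log hw
  have hn0 : n ≠ 0 := by
    rintro rfl
    exact (pow_pos (by linarith : 0 < w) 8).ne' (by simpa using hn)
  calc 2 * (1 / (2 * w)) = Real.exp (-(2 * (Real.log w / 2))) := by
        rw [mul_div_cancel₀ _ two_ne_zero, Real.exp_neg, Real.exp_log (by linarith)]
        field_simp
    _ ≤ (1 - Real.log w / 2 / n) ^ n :=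
        exp_neg_two_mul_le_one_sub_div_pow hn0 (by positivity)
          (by linarith [thirtyTwo_mul_log_le_pow_eight hw])
    _ = (1 - Real.log w / (2 * w ^ 8)) ^ n := by rw [div_div, hn]

lemma ceil_mul_log_le (hw : 2 ≤ w) (hn : w ^ 8 = n) : ⌈8 * w * Real.log w⌉₊ ≤ n := by
  have hlog := half_le_log hw
  rw [Nat.ceil_le, ← hn]
  calc 8 * w * Real.log w ≤ w ^ 3 * w * w := by
        gcongr
        · nlinarith [pow_le_pow_left₀ (by norm_num) hw 3]
        · linarith [Real.log_le_sub_one_of_pos (by linarith : 0 < w)]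
    _ = w ^ 5 := by ring
    _ ≤ w ^ 8 := pow_le_pow_right₀ (by linarith) (by norm_num)

lemma measureReal_compl_competitiveEvent_le_of_pow_eight (hw : 2 ≤ w) (hn : w ^ 8 = n) {r : ℝ}
    (hr : 0 < r) (hr2 : r ^ 2 = 8 * Real.log w / w ^ 8) :
    (iidLaw (Fin n) volume).real
        (competitiveEvent n ⌈8 * w ^ 4 * Real.log w⌉₊ (r / 8) ((r / 8 / 3) ^ 2) ((8 * r) ^ 2))ᶜ ≤
      192 * Real.log w ^ 2 / w ^ 4 := by
  have hlog := half_le_log hw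
  have hR : (2 * (r / 8)) ^ 2 = Real.log w / (2 * w ^ 8) := by linear_combination hr2 / 16
  have hR' : (4 * (r / 8)) ^ 2 = 2 * Real.log w / w ^ 8 := by linear_combination hr2 / 4
  have hr2' : (2 * r) ^ 2 = 32 * Real.log w / w ^ 8 := by linear_combination 4 * hr2
  have hr_le_one : (2 * r) ^ 2 ≤ 1 :=
    hr2'.trans_le (div_le_one_of_le₀ (thirtyTwo_mul_log_le_pow_eight hw) (by positivity))
  have h_gf : ⌈8 * w * Real.log w⌉₊ ≤ ⌈8 * w ^ 4 * Real.log w⌉₊ := by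
    gcongr
    exact le_self_pow₀ (by linarith) (by norm_num)
  have h_bound := measureReal_compl_competitiveEvent_le h_gf (ceil_mul_log_le hw hn) (R := r / 8)
    (by positivity) (by nlinarith) hr (by nlinarith) (t := 1 / (2 * w)) (by positivity)
    (hR ▸ two_mul_one_div_le_one_sub_pow hw hn)
  rw [hR, hR', hr2'] at h_bound
  calc _ ≤ _ := h_bound
    _ ≤ Real.log w ^ 2 / w ^ 4 + (4 * Real.log w ^ 2 / w ^ 4 + 4 * Real.log w ^ 2 / w ^ 4 +
          128 * Real.log w ^ 2 / w ^ 4) + 8 * Real.log w ^ 2 / w ^ 4 :=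
      add_le_add (add_le_add (net_failure_le hw hn) (add_le_add (add_le_add
        (vacancy_failure_le hw) (hit_failure_le hw)) (separation_failure_le hw)))
        (spoiled_failure_le hw)
    _ = 145 * Real.log w ^ 2 / w ^ 4 := by ring
    _ ≤ 192 * Real.log w ^ 2 / w ^ 4 := by gcongr; norm_num

lemma exists_two_le_pow_eight_eq (hn : 256 ≤ n) : ∃ w : ℝ, 2 ≤ w ∧ w ^ 8 = n := by
  have hw : ((n : ℝ) ^ ((8 : ℕ) : ℝ)⁻¹) ^ 8 = n :=
    Real.rpow_inv_natCast_pow n.cast_nonneg (by norm_num)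
  refine ⟨_, le_of_pow_le_pow_left₀ (n := 8) (by norm_num) (by positivity) ?_, hw⟩
  rw [hw]
  exact_mod_cast hn

end Asymptotics

/-- There are constants `c, c₁, a, b, K > 0` such that for all sufficiently large `n`:
for `n` points chosen independently and uniformly from the flat unit torus, with
`f = ⌈c √n log n⌉` and `R = c₁ √((log n)/n)`, with probability at least
`1 - K (log² n)/√n`, the Voronoi cell of the point selected by the player's online strategy
has area at least `a (log n)/n`, while every Voronoi cell has area at most `b (log n)/n`;
so the strategy is `O(1)`-competitive against the prophet. -/
theorem stmt_15 :
    ∃ c c₁ a b K : ℝ, 0 < c ∧ 0 < c₁ ∧ 0 < a ∧ 0 < b ∧ 0 < K ∧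
      ∃ n₀ : ℕ, ∀ n : ℕ, n₀ ≤ n →
        1 - ENNReal.ofReal (K * (Real.log n) ^ 2 / Real.sqrt n) ≤
          (Measure.pi fun _ : Fin n => (volume : Measure T2))
            {ω : Fin n → T2 |
              ENNReal.ofReal (a * Real.log n / n) ≤
                volume (vor (selPoint n ⌈c * Real.sqrt n * Real.log n⌉₊
                    (c₁ * Real.sqrt (Real.log n / n)) ω) (Set.range ω)) ∧
              ∀ i : Fin n,
                volume (vor (ω i) (Set.range ω)) ≤
                  ENNReal.ofReal (b * Real.log n / n)} := by
  refine ⟨1, 1 / 8, 1 / 576, 64, 3, by norm_num, by norm_num, by norm_num, by norm_num,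
    by norm_num, 256, fun n hn => one_sub_ofReal_le_measure ?_⟩
  obtain ⟨w, hw, hwn⟩ := exists_two_le_pow_eight_eq hn
  have hlog : 0 < Real.log w := Real.log_pos (by linarith)
  set r := Real.sqrt (Real.log n / n)
  have hr2 : r ^ 2 = Real.log n / n := Real.sq_sqrt (by positivity)
  have hlog_n : Real.log n = 8 * Real.log w := by rw [← hwn, Real.log_pow]; norm_num
  have hsqrt : Real.sqrt n = w ^ 4 := by
    rw [← hwn, show w ^ 8 = (w ^ 4) ^ 2 by ring, Real.sqrt_sq (by positivity)]
  have hf : 1 * Real.sqrt n * Real.log n = 8 * w ^ 4 * Real.log w := by rw [hsqrt, hlog_n]; ring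
  have hR : 1 / 8 * r = r / 8 := by ring
  have hα : 1 / 576 * Real.log n / n = (r / 8 / 3) ^ 2 := by linear_combination -hr2 / 576
  have hβ : 64 * Real.log n / n = (8 * r) ^ 2 := by linear_combination -64 * hr2
  have hε : 3 * Real.log n ^ 2 / Real.sqrt n = 192 * Real.log w ^ 2 / w ^ 4 := by
    rw [hsqrt, hlog_n]; ring
  rw [hf, hR, hα, hβ, hε]
  have hr0 : 0 < r := Real.sqrt_pos.2 (by rw [hlog_n, ← hwn]; positivity)
  exact measureReal_compl_competitiveEvent_le_of_pow_eight hw hwn hr0 (by rw [hr2, hlog_n, hwn])
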